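/- arXiv:1409.6466 — 2 statements merged into one kernel-verified Lean document; each statement's English description precedes it below -/
import Mathlib

section
/- Let S be a finite nonempty set, P : S × S → [0,1], and b : S → [0,1]. For every s ∈ S, sup over all runs σ from s of min( val_P(σ), b(σ 1) ) equals max_{t ∈ S} min( P(s,t), b(t), r_P(t) ). -/
/-!
Removing the first state of a run from `s` yields a run from its second state `t`; this matches the
runs from `s` bijectively with the pairs of a state `t` and a run `τ` from `t`, and the value of the
run is `P s t ⊓ val τ`. For fixed `t`, the factors `P s t` and `b t` do not depend on `τ`, so the
frame law `a ⊓ ⨆ i, f i = ⨆ i, a ⊓ f i` pulls them out of the supremum over `τ`.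
-/

/-- `[0,1]` as a complete lattice. -/
instance : Fact ((0:ℝ) ≤ 1) := ⟨zero_le_one⟩

/-- The value of a run `σ`: `inf_{i ≥ 0} P(σ i, σ (i+1))`. -/
noncomputable def valP {S : Type*} (P : S → S → unitInterval) (σ : ℕ → S) : unitInterval :=
  ⨅ i : ℕ, P (σ i) (σ (i + 1))

/-- `r_P(s)`: the supremum of the values of all runs starting at `s`. -/
noncomputable def rP {S : Type*} (P : S → S → unitInterval) (s : S) : unitInterval :=
  ⨆ σ : {σ : ℕ → S // σ 0 = s}, valP P σ.1

section

variable {S L : Type*}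

/-- The runs from `s`. All sequences of states qualify; which transitions are possible is
recorded only by the value of the run. -/
abbrev RunFrom (s : S) : Type _ := {σ : ℕ → S // σ 0 = s}

namespace RunFrom

/-- The run that goes from `s` to the initial state of `τ` and then follows `τ`. -/
def cons (s : S) {t : S} (τ : RunFrom t) : RunFrom s :=
  ⟨fun | 0 => s | n + 1 => τ.1 n, rfl⟩

/-- The decomposition of a run from `s` into its second state and the run from there. -/
def equivSigma (s : S) : RunFrom s ≃ Σ t : S, RunFrom t where
  toFun σ := ⟨σ.1 1, fun n => σ.1 (n + 1), rfl⟩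
  invFun τ := cons s τ.2
  left_inv := by
    rintro ⟨σ, rfl⟩
    ext (_ | n) <;> rfl
  right_inv := by
    rintro ⟨_, τ, rfl⟩
    rfl

theorem iSup_eq_iSup_cons [CompleteLattice L] (s : S) (f : RunFrom s → L) :
    ⨆ σ, f σ = ⨆ (t : S) (τ : RunFrom t), f (τ.cons s) :=
  ((equivSigma s).symm.iSup_comp (g := f)).symm.trans iSup_sigma

end RunFrom

/-- The value of a run, as `valP`, for transition degrees in any type with infima. -/
def runValue [InfSet L] (P : S → S → L) (σ : ℕ → S) : L :=
  ⨅ i, P (σ i) (σ (i + 1))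

/-- The supremum of the values of the runs from `s`, as `rP`, for transition degrees in any
complete lattice. -/
def runPossibility [CompleteLattice L] (P : S → S → L) (s : S) : L :=
  ⨆ σ : RunFrom s, runValue P σ.1

theorem runValue_cons [CompleteLattice L] (P : S → S → L) (s : S) {t : S} (τ : RunFrom t) :
    runValue P (τ.cons s).1 = P s t ⊓ runValue P τ.1 := by
  obtain ⟨τ, rfl⟩ := τ
  exact (inf_iInf_nat_succ _).symm

theorem next_step_semantics_general [Order.Frame L] (P : S → S → L) (b : S → L) (s : S) :
    (⨆ σ : RunFrom s, runValue P σ.1 ⊓ b (σ.1 1))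
      = ⨆ t : S, P s t ⊓ (b t ⊓ runPossibility P t) := by
  have value_cons (t : S) (τ : RunFrom t) :
      runValue P (τ.cons s).1 ⊓ b ((τ.cons s).1 1) = P s t ⊓ (b t ⊓ runValue P τ.1) := by
    have second_state : (τ.cons s).1 1 = t := τ.2
    rw [runValue_cons, second_state, inf_assoc, inf_comm (runValue P τ.1)]
  calc ⨆ σ : RunFrom s, runValue P σ.1 ⊓ b (σ.1 1)
      = ⨆ (t : S) (τ : RunFrom t), runValue P (τ.cons s).1 ⊓ b ((τ.cons s).1 1) :=
        RunFrom.iSup_eq_iSup_cons s _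
    _ = ⨆ (t : S) (τ : RunFrom t), P s t ⊓ (b t ⊓ runValue P τ.1) := by simp only [value_cons]
    _ = ⨆ t : S, P s t ⊓ (b t ⊓ runPossibility P t) := by simp only [runPossibility, inf_iSup_eq]

end

/-- Semantics of the next-step operator: the sup over all runs `σ` from `s` of
`min(val_P(σ), b(σ 1))` equals `max_{t ∈ S} min(P(s,t), b(t), r_P(t))`. -/
theorem next_step_semantics {S : Type*} [Fintype S] [Nonempty S]
    (P : S → S → unitInterval) (b : S → unitInterval) (s : S) :
    (⨆ σ : {σ : ℕ → S // σ 0 = s}, min (valP P σ.1) (b (σ.1 1)))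
      = ⨆ t : S, min (P s t) (min (b t) (rP P t)) :=
  next_step_semantics_general P b s
end

section
/- Let S be a finite nonempty set, P : S × S → [0,1], and a : S → [0,1]. Define the operator f by f(Z)(s) := min( a(s), max_{t ∈ S} min( P(s,t), Z(t), r_P(t) ) ), and the iteration Z₀(s) := 1 for all s and Z_{i+1} := f(Z_i). Then the sequence (Z_i) is pointwise nonincreasing, and there exists k such that Z_{k+1} = Z_k; moreover for every such k, Z_k equals the greatest fixpoint A of f, where A(s) := sup over all runs σ from s of min( val_P(σ), inf_{i ≥ 0} a(σ i) ). -/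
/-- `A(s) = Po(s ⊨ □Φ)`: the sup over runs `σ` from `s` of
`min(val_P(σ), inf_{i≥0} a(σ i))`, where `a = ||Φ||`. -/
noncomputable def alwaysSem {S : Type*} (P : S → S → unitInterval)
    (a : S → unitInterval) (s : S) : unitInterval :=
  ⨆ σ : {σ : ℕ → S // σ 0 = s}, min (valP P σ.1) (⨅ i : ℕ, a (σ.1 i))

/-- The operator `f(Z)(s) = min( a(s), max_{t} min(P(s,t), Z(t), r_P(t)) )`. -/
noncomputable def fOp {S : Type*} [Fintype S] (P : S → S → unitInterval)
    (a : S → unitInterval) (Z : S → unitInterval) : S → unitInterval :=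
  fun s => min (a s) (⨆ t : S, min (P s t) (min (Z t) (rP P t)))

open Set

section Iteration

variable {α : Type*} [PartialOrder α]

theorem exists_succ_eq_of_antitone_of_finite_range {u : ℕ → α} (hu : Antitone u)
    (hfin : (range u).Finite) : ∃ k, u (k + 1) = u k := by
  obtain ⟨i, j, hij, heq⟩ := hfin.exists_lt_map_eq_of_forall_mem mem_range_self
  exact ⟨i, (hu i.le_succ).antisymm (heq.le.trans (hu (Nat.succ_le_of_lt hij)))⟩

theorem iterate_top_eq_of_isGreatest_le_map [OrderTop α] {f : α → α} (hf : Monotone f) {x : α}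
    (hx : IsGreatest {y | y ≤ f y} x) {k : ℕ} (hk : f^[k + 1] ⊤ = f^[k] ⊤) : f^[k] ⊤ = x := by
  apply le_antisymm
  · exact hx.2 (hk.symm.trans (Function.iterate_succ_apply' f k ⊤)).le
  · exact (hf.monotone_iterate_of_le_map hx.1 (Nat.zero_le k)).trans (hf.iterate k le_top)

end Iteration

section Runs

variable {S : Type*} (P : S → S → unitInterval) (a : S → unitInterval)

theorem valP_eq_min_tail (σ : ℕ → S) :
    valP P σ = min (P (σ 0) (σ 1)) (valP P fun i => σ (i + 1)) :=
  (inf_iInf_nat_succ fun i => P (σ i) (σ (i + 1))).symm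

theorem valP_le_rP (σ : ℕ → S) : valP P σ ≤ rP P (σ 0) :=
  le_iSup (fun τ : {τ : ℕ → S // τ 0 = σ 0} => valP P τ.1) ⟨σ, rfl⟩

theorem min_valP_iInf_le_alwaysSem (σ : ℕ → S) :
    min (valP P σ) (⨅ i, a (σ i)) ≤ alwaysSem P a (σ 0) :=
  le_iSup (fun τ : {τ : ℕ → S // τ 0 = σ 0} => min (valP P τ.1) (⨅ i, a (τ.1 i))) ⟨σ, rfl⟩

end Runs

section Operator

variable {S : Type*} [Fintype S] {P : S → S → unitInterval} {a : S → unitInterval}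

theorem fOp_mono : Monotone (fOp P a) := fun _ _ hXY s =>
  min_le_min_left (a s) <| iSup_mono fun t =>
    min_le_min_left (P s t) <| min_le_min_right (rP P t) (hXY t)

variable (P a) in
theorem exists_fOp_apply_eq (Z : S → unitInterval) (s : S) :
    ∃ t, fOp P a Z s = min (a s) (min (P s t) (min (Z t) (rP P t))) := by
  have : Nonempty S := ⟨s⟩
  obtain ⟨t, ht⟩ := exists_eq_ciSup_of_finite (f := fun t => min (P s t) (min (Z t) (rP P t)))
  exact ⟨t, congrArg (min (a s)) ht.symm⟩

theorem fOp_apply_mem {V : Set unitInterval} (hP : ∀ s t, P s t ∈ V) (ha : ∀ s, a s ∈ V)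
    (hr : ∀ s, rP P s ∈ V) {Z : S → unitInterval} (hZ : ∀ s, Z s ∈ V) (s : S) :
    fOp P a Z s ∈ V := by
  have hmin : InfClosed V := LinearOrder.infClosed V
  obtain ⟨t, ht⟩ := exists_fOp_apply_eq P a Z s
  rw [ht]
  exact hmin (ha s) (hmin (hP s t) (hmin (hZ t) (hr t)))

theorem finite_range_iterate_fOp (Z : S → unitInterval) :
    (range fun k => (fOp P a)^[k] Z).Finite := by
  let V : Set unitInterval := range P.uncurry ∪ range a ∪ range (rP P) ∪ range Z
  have hV : V.Finite :=
    (((finite_range _).union (finite_range _)).union (finite_range _)).union (finite_range _)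
  have hmaps : MapsTo (fOp P a) {Y | ∀ s, Y s ∈ V} {Y | ∀ s, Y s ∈ V} := fun Y hY =>
    fOp_apply_mem (fun s t => .inl (.inl (.inl ⟨(s, t), rfl⟩)))
      (fun s => .inl (.inl (.inr ⟨s, rfl⟩))) (fun s => .inl (.inr ⟨s, rfl⟩)) hY
  refine (Finite.pi' fun _ => hV).subset ?_
  rintro _ ⟨k, rfl⟩
  exact hmaps.iterate k fun s => .inr ⟨s, rfl⟩

theorem alwaysSem_le_fOp_alwaysSem : alwaysSem P a ≤ fOp P a (alwaysSem P a) := by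
  intro s
  refine iSup_le ?_
  rintro ⟨σ, rfl⟩
  let τ : ℕ → S := fun i => σ (i + 1)
  calc min (valP P σ) (⨅ i, a (σ i))
      = min (min (P (σ 0) (σ 1)) (valP P τ)) (min (a (σ 0)) (⨅ i, a (τ i))) :=
        congrArg₂ min (valP_eq_min_tail P σ) (inf_iInf_nat_succ fun i => a (σ i)).symm
    _ = min (a (σ 0)) (min (P (σ 0) (σ 1)) (min (min (valP P τ) (⨅ i, a (τ i))) (valP P τ))) := by
        grind
    _ ≤ min (a (σ 0)) (min (P (σ 0) (σ 1)) (min (alwaysSem P a (σ 1)) (rP P (σ 1)))) := by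
        gcongr
        exacts [min_valP_iInf_le_alwaysSem P a τ, valP_le_rP P τ]
    _ ≤ fOp P a (alwaysSem P a) (σ 0) :=
        min_le_min_left _ <|
          le_iSup (fun t => min (P (σ 0) t) (min (alwaysSem P a t) (rP P t))) (σ 1)

theorem exists_le_and_le_of_le_fOp {Z : S → unitInterval} (hZ : Z ≤ fOp P a Z) (s : S) :
    ∃ t, Z s ≤ P s t ∧ Z s ≤ Z t := by
  obtain ⟨t, ht⟩ := exists_fOp_apply_eq P a Z s
  have hst : Z s ≤ min (a s) (min (P s t) (min (Z t) (rP P t))) := (hZ s).trans_eq ht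
  simp only [le_min_iff] at hst
  exact ⟨t, hst.2.1, hst.2.2.1⟩

theorem le_alwaysSem_of_le_fOp {Z : S → unitInterval} (hZ : Z ≤ fOp P a Z) :
    Z ≤ alwaysSem P a := by
  choose next hP hnext using exists_le_and_le_of_le_fOp hZ
  intro s
  let σ : ℕ → S := fun i => next^[i] s
  have hσ (i : ℕ) : σ (i + 1) = next (σ i) := Function.iterate_succ_apply' next i s
  have hmono : Monotone fun i => Z (σ i) := monotone_nat_of_le_succ fun i => hσ i ▸ hnext (σ i)
  have hge (i : ℕ) : Z s ≤ Z (σ i) := hmono i.zero_le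
  have hval : Z s ≤ valP P σ := le_iInf fun i => (hge i).trans (hσ i ▸ hP (σ i))
  have ha : Z s ≤ ⨅ i, a (σ i) :=
    le_iInf fun i => (hge i).trans ((hZ (σ i)).trans (min_le_left _ _))
  exact (le_min hval ha).trans (min_valP_iInf_le_alwaysSem P a σ)

theorem isGreatest_alwaysSem : IsGreatest {Z | Z ≤ fOp P a Z} (alwaysSem P a) :=
  ⟨alwaysSem_le_fOp_alwaysSem, fun _ => le_alwaysSem_of_le_fOp⟩

end Operator

/-- The iteration `Z₀ = 1`, `Z_{i+1} = f(Z_i)` is pointwise nonincreasing, stabilizes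
after finitely many steps, and any stabilization point is the greatest fixpoint `A`. -/
theorem fixpoint_iteration {S : Type*} [Fintype S] [Nonempty S]
    (P : S → S → unitInterval) (a : S → unitInterval) (Z : ℕ → S → unitInterval)
    (hZ0 : Z 0 = fun _ => 1) (hZsucc : ∀ i : ℕ, Z (i + 1) = fOp P a (Z i)) :
    (∀ (i : ℕ) (s : S), Z (i + 1) s ≤ Z i s) ∧
    (∃ k : ℕ, Z (k + 1) = Z k) ∧
    (∀ k : ℕ, Z (k + 1) = Z k → Z k = alwaysSem P a) := by
  have hiter : Z = fun k => (fOp P a)^[k] ⊤ := by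
    funext k
    induction k with
    | zero => exact hZ0
    | succ k ih => rw [hZsucc, ih, Function.iterate_succ_apply']
  have hanti : Antitone Z := hiter ▸ fOp_mono.antitone_iterate_of_map_le le_top
  have hfin : (range Z).Finite := hiter ▸ finite_range_iterate_fOp ⊤
  refine ⟨fun i => hanti i.le_succ, exists_succ_eq_of_antitone_of_finite_range hanti hfin, ?_⟩
  rw [hiter]
  exact fun k => iterate_top_eq_of_isGreatest_le_map fOp_mono isGreatest_alwaysSem
end
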